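/- Let f : ℝ → ℝ be continuous on [0,1] and suppose that ∫₀ˣ f(u)/√(x² − u²) du = 0 for every x ∈ [0,1]. Then f(u) = 0 for every u ∈ [0,1]. -/

import Mathlib

open Real intervalIntegral

/-!
Abel's inversion: multiply `𝒜f(x)` by `x / √(t² − x²)`, integrate over `0 < x < t` and exchange the
order of integration. The inner integral `∫_u^t x / (√(t² − x²) √(x² − u²)) dx` equals `π / 2`
whatever `u` is, so the result is `π / 2 · ∫₀ᵗ f`. If `𝒜f` vanishes, so does the primitive of `f`,
and hence `f` itself.
-/

open MeasureTheory Set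

section Kernel

variable {t u x : ℝ}

theorem hasDerivAt_arcsin_two_mul_sub_div {a b y : ℝ} (hay : a < y) (hyb : y < b) :
    HasDerivAt (fun y => arcsin ((2 * y - a - b) / (b - a))) (1 / (√(b - y) * √(y - a))) y := by
  have ha : 0 < y - a := sub_pos.2 hay
  have hb : 0 < b - y := sub_pos.2 hyb
  have hab : 0 < b - a := by linarith
  have hsq : 1 - ((2 * y - a - b) / (b - a)) ^ 2
      = (2 * (√(b - y) * √(y - a)) / (b - a)) ^ 2 := by
    rw [div_pow, div_pow, mul_pow, mul_pow, sq_sqrt ha.le, sq_sqrt hb.le]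
    field_simp
    ring
  have hne_neg_one : (2 * y - a - b) / (b - a) ≠ -1 := by
    rw [Ne, div_eq_iff hab.ne']
    intro h
    linarith
  have hne_one : (2 * y - a - b) / (b - a) ≠ 1 := by
    rw [Ne, div_eq_iff hab.ne']
    intro h
    linarith
  have haffine : HasDerivAt (fun y => (2 * y - a - b) / (b - a)) (2 * 1 / (b - a)) y :=
    ((((hasDerivAt_id y).const_mul 2).sub_const a).sub_const b).div_const (b - a)
  refine ((hasDerivAt_arcsin hne_neg_one hne_one).comp y haffine).congr_deriv ?_
  rw [hsq, sqrt_sq (by positivity)]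
  field_simp

/-- The kernel `x / (√(t² − x²) √(x² − u²))` obtained by composing the Abel transform with its
formal inverse. For `0 ≤ x ≤ u` the second square root is `0` by convention, so that the kernel
vanishes there and all integrals can be taken over the square `(0, t]²` instead of a triangle. -/
noncomputable def abelKernel (t x u : ℝ) : ℝ :=
  x / (√(t ^ 2 - x ^ 2) * √(x ^ 2 - u ^ 2))

theorem abelKernel_nonneg (hx : 0 ≤ x) : 0 ≤ abelKernel t x u := by
  unfold abelKernel
  positivity

theorem abelKernel_eq_zero_of_le (hx : 0 ≤ x) (hxu : x ≤ u) : abelKernel t x u = 0 := by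
  rw [abelKernel, sqrt_eq_zero_of_nonpos (sub_nonpos.2 (pow_le_pow_left₀ hx hxu 2)), mul_zero,
    div_zero]

theorem measurable_abelKernel (t : ℝ) : Measurable (Function.uncurry (abelKernel t)) := by
  unfold abelKernel Function.uncurry
  fun_prop

theorem hasDerivAt_half_arcsin_abelKernel (hu : 0 ≤ u) (hux : u < x) (hxt : x < t) :
    HasDerivAt (fun x => arcsin ((2 * x ^ 2 - u ^ 2 - t ^ 2) / (t ^ 2 - u ^ 2)) / 2)
      (abelKernel t x u) x := by
  have hux_sq : u ^ 2 < x ^ 2 := pow_lt_pow_left₀ hux hu two_ne_zero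
  have hxt_sq : x ^ 2 < t ^ 2 := pow_lt_pow_left₀ hxt (hu.trans hux.le) two_ne_zero
  refine (((hasDerivAt_arcsin_two_mul_sub_div hux_sq hxt_sq).comp_of_eq x
    (hasDerivAt_pow 2 x) rfl).div_const 2).congr_deriv ?_
  rw [abelKernel]
  push_cast
  ring

theorem continuous_half_arcsin_abelKernel (t u : ℝ) :
    Continuous fun x => arcsin ((2 * x ^ 2 - u ^ 2 - t ^ 2) / (t ^ 2 - u ^ 2)) / 2 := by
  fun_prop

theorem intervalIntegrable_abelKernel (hu : 0 ≤ u) (hut : u ≤ t) :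
    IntervalIntegrable (fun x => abelKernel t x u) volume u t :=
  (intervalIntegrable_iff_integrableOn_Ioc_of_le hut).2 <|
    integrableOn_deriv_of_nonneg (continuous_half_arcsin_abelKernel t u).continuousOn
      (fun _ hx => hasDerivAt_half_arcsin_abelKernel hu hx.1 hx.2)
      (fun _ hx => abelKernel_nonneg (hu.trans hx.1.le))

theorem intervalIntegral_abelKernel (hu : 0 ≤ u) (hut : u < t) :
    ∫ x in u..t, abelKernel t x u = π / 2 := by
  have hne : t ^ 2 - u ^ 2 ≠ 0 := (sub_pos.2 (pow_lt_pow_left₀ hut hu two_ne_zero)).ne'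
  have hupper : (2 * t ^ 2 - u ^ 2 - t ^ 2) / (t ^ 2 - u ^ 2) = 1 := by
    rw [div_eq_one_iff_eq hne]
    ring
  have hlower : (2 * u ^ 2 - u ^ 2 - t ^ 2) / (t ^ 2 - u ^ 2) = -1 := by
    rw [div_eq_iff hne]
    ring
  rw [integral_eq_sub_of_hasDerivAt_of_le hut.le
    (continuous_half_arcsin_abelKernel t u).continuousOn
    (fun _ hx => hasDerivAt_half_arcsin_abelKernel hu hx.1 hx.2)
    (intervalIntegrable_abelKernel hu hut.le), hupper, hlower, arcsin_one, arcsin_neg_one]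
  ring

theorem abelKernel_eq_zero_of_mem_sdiff (hx : x ∈ Ioc 0 t \ Ioc u t) : abelKernel t x u = 0 :=
  abelKernel_eq_zero_of_le hx.1.1.le (not_lt.1 fun hux => hx.2 ⟨hux, hx.1.2⟩)

theorem integrableOn_abelKernel (hu : 0 ≤ u) (hut : u ≤ t) :
    IntegrableOn (fun x => abelKernel t x u) (Ioc 0 t) :=
  ((intervalIntegrable_iff_integrableOn_Ioc_of_le hut).1
    (intervalIntegrable_abelKernel hu hut)).of_forall_sdiff_eq_zero measurableSet_Ioc
      fun _ => abelKernel_eq_zero_of_mem_sdiff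

theorem setIntegral_abelKernel (hu : 0 ≤ u) (hut : u < t) :
    ∫ x in Ioc 0 t, abelKernel t x u = π / 2 := by
  rw [setIntegral_eq_of_subset_of_forall_sdiff_eq_zero measurableSet_Ioc (Ioc_subset_Ioc_left hu)
    fun _ => abelKernel_eq_zero_of_mem_sdiff, ← integral_of_le hut.le,
    intervalIntegral_abelKernel hu hut]

end Kernel

section Inversion

variable {E : Type*} [NormedAddCommGroup E] [NormedSpace ℝ E] {f : ℝ → E} {t x : ℝ}

/-- The Abel-type transform `𝒜f(x) = ∫₀ˣ f(u) / √(x² − u²) du` of a vector-valued function. For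
integrable `f` the integral converges for almost every `x > 0`; where it diverges, the Bochner
integral gives the junk value `0`. -/
noncomputable def abelTransform (f : ℝ → E) (x : ℝ) : E :=
  ∫ u in (0 : ℝ)..x, (√(x ^ 2 - u ^ 2))⁻¹ • f u

theorem ae_restrict_Ioc_mem_Ioo (a b : ℝ) : ∀ᵐ u ∂volume.restrict (Ioc a b), u ∈ Ioo a b := by
  rw [← restrict_Ioo_eq_restrict_Ioc]
  exact ae_restrict_mem measurableSet_Ioo

theorem integrable_abelKernel_smul (hf : IntegrableOn f (Ioc 0 t)) :
    Integrable (Function.uncurry fun x u => abelKernel t x u • f u)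
      ((volume.restrict (Ioc 0 t)).prod (volume.restrict (Ioc 0 t))) := by
  have hmeas : AEStronglyMeasurable (Function.uncurry fun x u => abelKernel t x u • f u)
      ((volume.restrict (Ioc 0 t)).prod (volume.restrict (Ioc 0 t))) :=
    (measurable_abelKernel t).aestronglyMeasurable.smul hf.aestronglyMeasurable.comp_snd
  refine (integrable_prod_iff' hmeas).2 ⟨?_, (hf.norm.const_mul (π / 2)).congr ?_⟩
  · filter_upwards [ae_restrict_Ioc_mem_Ioo 0 t] with u hu
    exact (integrableOn_abelKernel hu.1.le hu.2.le).smul_const (f u)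
  · filter_upwards [ae_restrict_Ioc_mem_Ioo 0 t] with u hu
    rw [← setIntegral_abelKernel hu.1.le hu.2, ← MeasureTheory.integral_mul_const]
    refine setIntegral_congr_fun measurableSet_Ioc fun x hx => ?_
    simp only [Function.uncurry, norm_smul, norm_of_nonneg (abelKernel_nonneg hx.1.le)]

theorem setIntegral_abelKernel_smul (f : ℝ → E) (hx : x ∈ Ioc 0 t) :
    ∫ u in Ioc 0 t, abelKernel t x u • f u = (x / √(t ^ 2 - x ^ 2)) • abelTransform f x := by
  have hzero : ∀ u ∈ Ioc 0 t \ Ioc 0 x, abelKernel t x u • f u = 0 := fun u hu => by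
    rw [abelKernel_eq_zero_of_le hx.1.le (not_le.1 fun hux => hu.2 ⟨hu.1.1, hux⟩).le, zero_smul]
  rw [setIntegral_eq_of_subset_of_forall_sdiff_eq_zero measurableSet_Ioc
    (Ioc_subset_Ioc_right hx.2) hzero, abelTransform, integral_of_le hx.1.le,
    ← MeasureTheory.integral_smul]
  simp only [abelKernel, smul_smul, div_mul_eq_div_div, div_eq_mul_inv (_ / _)]

variable [CompleteSpace E]

theorem setIntegral_smul_abelTransform (hf : IntegrableOn f (Ioc 0 t)) :
    ∫ x in Ioc 0 t, (x / √(t ^ 2 - x ^ 2)) • abelTransform f x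
      = (π / 2) • ∫ u in Ioc 0 t, f u := calc
  _ = ∫ x in Ioc 0 t, ∫ u in Ioc 0 t, abelKernel t x u • f u :=
    setIntegral_congr_fun measurableSet_Ioc fun _ hx => (setIntegral_abelKernel_smul f hx).symm
  _ = ∫ u in Ioc 0 t, ∫ x in Ioc 0 t, abelKernel t x u • f u :=
    integral_integral_swap (integrable_abelKernel_smul hf)
  _ = ∫ u in Ioc 0 t, (π / 2) • f u := by
    refine integral_congr_ae ?_
    filter_upwards [ae_restrict_Ioc_mem_Ioo 0 t] with u hu
    rw [_root_.integral_smul_const, setIntegral_abelKernel hu.1.le hu.2]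
  _ = (π / 2) • ∫ u in Ioc 0 t, f u := MeasureTheory.integral_smul _ _

theorem ae_eq_zero_of_forall_setIntegral_Ioc_eq_zero {a b : ℝ} (hf : IntegrableOn f (Ioc a b))
    (h : ∀ t ∈ Ioo a b, ∫ x in Ioc a t, f x = 0) : f =ᵐ[volume.restrict (Ioc a b)] 0 := by
  rcases le_or_gt b a with hba | hab
  · simp only [Ioc_eq_empty_of_le hba, Measure.restrict_empty, ae_zero, Filter.EventuallyEq,
      Filter.eventually_bot]
  have hderiv := ae_restrict_of_ae (s := Ioc a b)
    ((intervalIntegrable_iff_integrableOn_Ioc_of_le hab.le).2 hf).ae_hasDerivAt_integral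
  filter_upwards [hderiv, ae_restrict_Ioc_mem_Ioo a b] with x hx hxab
  rw [uIcc_of_le hab.le] at hx
  refine (hx (Ioo_subset_Icc_self hxab) a (left_mem_Icc.2 hab.le)).unique
    ((hasDerivAt_const x (0 : E)).congr_of_eventuallyEq ?_)
  filter_upwards [Ioo_mem_nhds hxab.1 hxab.2] with t ht
  rw [integral_of_le ht.1.le, h t ht]

theorem abel_transform_injective_general {T : ℝ} (hf : IntegrableOn f (Icc 0 T))
    (h : ∀ᵐ x ∂volume.restrict (Icc 0 T), abelTransform f x = 0) :
    f =ᵐ[volume.restrict (Icc 0 T)] 0 := by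
  rw [← restrict_Ioc_eq_restrict_Icc] at h ⊢
  rw [integrableOn_Icc_iff_integrableOn_Ioc] at hf
  refine ae_eq_zero_of_forall_setIntegral_Ioc_eq_zero hf fun t ht => ?_
  have hsub : Ioc 0 t ⊆ Ioc 0 T := Ioc_subset_Ioc_right ht.2.le
  have hzero : ∫ x in Ioc 0 t, (x / √(t ^ 2 - x ^ 2)) • abelTransform f x = 0 := by
    refine integral_eq_zero_of_ae ?_
    filter_upwards [ae_restrict_of_ae_restrict_of_subset hsub h] with x hx
    rw [hx, smul_zero, Pi.zero_apply]
  rw [setIntegral_smul_abelTransform (hf.mono_set hsub)] at hzero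
  exact (smul_eq_zero.1 hzero).resolve_left (by positivity)

end Inversion

/-- Injectivity of the Abel-type transform `𝒜f(x) = ∫₀ˣ f(u)/√(x² − u²) du`
on continuous functions on `[0,1]`. -/
theorem abel_transform_injective
    (f : ℝ → ℝ) (hf : ContinuousOn f (Set.Icc 0 1))
    (h : ∀ x ∈ Set.Icc (0 : ℝ) 1,
      ∫ u in (0:ℝ)..x, f u / Real.sqrt (x ^ 2 - u ^ 2) = 0) :
    ∀ u ∈ Set.Icc (0 : ℝ) 1, f u = 0 := by
  have hAbel : ∀ x ∈ Icc (0 : ℝ) 1, abelTransform f x = 0 := by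
    simpa only [abelTransform, smul_eq_mul, inv_mul_eq_div] using h
  exact Measure.eqOn_Icc_of_ae_eq volume zero_ne_one
    (abel_transform_injective_general hf.integrableOn_Icc
      (ae_restrict_of_forall_mem measurableSet_Icc hAbel)) hf continuousOn_const
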